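/- Let p ≥ 2 be an integer and let (M, (W_j), (S_i^j)) be an exact-repair regenerating code with parameters (n, k, d) = (n, 2p, 3p), where n ≥ 3p+1, and secondary parameters (B,α,β). Then B ≤ B_p − (p²−1)β/16, where B_p = pα + (p(p−1)/2)β + (p+1)pβ is computed with k = 2p and d = 3p. -/

import Mathlib

open Finset

/-- Shannon entropy (base 2) of a finitely-valued random variable `X` on a finite
probability space with mass function `P`. -/
noncomputable def entH {Ω S : Type*} [Fintype Ω] (P : Ω → ℝ) (X : Ω → S) : ℝ :=
  letI := Classical.decEq S
  ∑ s ∈ Finset.univ.image X,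
    -((∑ ω ∈ Finset.univ.filter (fun ω => X ω = s), P ω) *
       Real.logb 2 (∑ ω ∈ Finset.univ.filter (fun ω => X ω = s), P ω))

/-- Conditional entropy `H(X | Y) = H(X, Y) - H(Y)`. -/
noncomputable def condH {Ω S T : Type*} [Fintype Ω] (P : Ω → ℝ) (X : Ω → S) (Y : Ω → T) : ℝ :=
  entH P (fun ω => (X ω, Y ω)) - entH P Y

/-- The joint random variable `W_J = (W_j : j ∈ J)`. -/
def jointW {Ω : Type*} {n : ℕ} {σW : Fin n → Type*} (W : ∀ j, Ω → σW j)
    (J : Finset (Fin n)) : Ω → ∀ j : J, σW j.1 :=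
  fun ω j => W j.1 ω

/-- The joint random variable `(S_i^j : (i,j) ∈ E)` for a set `E` of pairs. -/
def jointS {Ω : Type*} {n : ℕ} {σS : Fin n → Fin n → Type*} (S : ∀ i j, Ω → σS i j)
    (E : Finset (Fin n × Fin n)) : Ω → ∀ e : E, σS e.1.1 e.1.2 :=
  fun ω e => S e.1.1 e.1.2 ω

/-- The joint random variable `S_I^j = (S_i^j : i ∈ I)`. -/
def jointSto {Ω : Type*} {n : ℕ} {σS : Fin n → Fin n → Type*} (S : ∀ i j, Ω → σS i j)
    (I : Finset (Fin n)) (j : Fin n) : Ω → ∀ i : I, σS i.1 j :=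
  fun ω i => S i.1 j ω

/-- An exact-repair regenerating code with parameters `(n,k,d)` (with `1 ≤ k ≤ d ≤ n-1`)
and secondary parameters `(B,α,β)`: the file `M`, the stored data `W j` on server `j`
(servers indexed by `Fin n`, server `j` of the paper being index `j-1`), and the helper
information `S i j` sent from server `i` to repair server `j`. -/
structure IsRegenCode {Ω : Type*} [Fintype Ω] (n k d : ℕ) (B α β : ℝ) (P : Ω → ℝ)
    {σM : Type*} {σW : Fin n → Type*} {σS : Fin n → Fin n → Type*}
    (M : Ω → σM) (W : ∀ j, Ω → σW j) (S : ∀ i j, Ω → σS i j) : Prop where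
  prob_nonneg : ∀ ω, 0 ≤ P ω
  prob_sum : ∑ ω, P ω = 1
  hk : 1 ≤ k
  hkd : k ≤ d
  hdn : d + 1 ≤ n
  hB : 0 ≤ B
  hα : 0 ≤ α
  hβ : 0 ≤ β
  hMB : entH P M = B
  hWα : ∀ j, entH P (W j) = α
  hWM : ∀ j, condH P (W j) M = 0
  hMW : ∀ J : Finset (Fin n), k ≤ J.card → condH P M (jointW W J) = 0
  hSβ : ∀ i j, i ≠ j → entH P (S i j) = β
  hSW : ∀ i j, i ≠ j → condH P (S i j) (W i) = 0
  hWS : ∀ (j : Fin n) (I : Finset (Fin n)), d ≤ I.card → j ∉ I →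
    condH P (W j) (jointSto S I j) = 0

/-- `B_q = qα + ((k-q)(k-q-1)/2)β + (d+1-k)(k-q)β`. -/
noncomputable def Bfun (k d q : ℕ) (α β : ℝ) : ℝ :=
  (q : ℝ) * α + (((k - q) * (k - q - 1) : ℕ) : ℝ) / 2 * β
    + (((d + 1 - k) * (k - q) : ℕ) : ℝ) * β

/-!
The joint entropies of the variables of a code form a polymatroid. Fix disjoint sets `T`, `U`, `N`
of `t`, `u`, `ν` nodes with `t + u + ν = k`, and consider the messages `Y = S_T^N, S_U^N, S_U^T`.

Together with `u` further nodes, `Y` makes it cheap to repair `N` and then `T`, which recovers the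
file; this bounds `H(Y)` from below. Conversely, let `T` and `U` be two parties that send helper
data to `N` and to each other. By data processing, the mutual information of what they exchange,
given what they send to `N`, is at most `I(W_T; W_U)`, and this forces `H(Y) ≤ B_0 + B_k - 2 * B`.
Adding up, `3 * B ≤ B_0 + B_u + B_k - (t * u + u * ν + ν * t) * β`.

For `k = 2 * p` and `u = p` one has `B_0 + B_k = 2 * B_p + p ^ 2 * β` and `t + ν = p`, which leaves
`3 * B ≤ 3 * B_p - t * ν * β`; the product `t * ν` is largest at `t = ⌊p / 2⌋`.
-/

section Entropy

variable {Ω : Type*} [Fintype Ω] {P : Ω → ℝ}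

open Classical in
/-- The mass under `P` of the block of `ω` in the partition of `Ω` into the classes of `r`. -/
noncomputable def blockMass (P : Ω → ℝ) (r : Setoid Ω) (ω : Ω) : ℝ :=
  ∑ ω' with r ω ω', P ω'

/-- The Shannon entropy (base 2) of the partition of `Ω` into the classes of `r`. A random
variable `X` enters through `Setoid.ker X` and joint variables through meets, so that variables
with different codomains live in one lattice. -/
noncomputable def partitionEntropy (P : Ω → ℝ) (r : Setoid Ω) : ℝ :=
  -∑ ω, P ω * Real.logb 2 (blockMass P r ω)

theorem blockMass_nonneg (hP : ∀ ω, 0 ≤ P ω) (r : Setoid Ω) (ω : Ω) : 0 ≤ blockMass P r ω :=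
  sum_nonneg fun ω' _ => hP ω'

theorem blockMass_congr {r : Setoid Ω} {ω ω' : Ω} (h : r ω ω') :
    blockMass P r ω = blockMass P r ω' := by
  unfold blockMass
  congr! 2 with ω''
  exact ⟨r.trans' (r.symm' h), r.trans' h⟩

theorem blockMass_pos (hP : ∀ ω, 0 ≤ P ω) (r : Setoid Ω) {ω : Ω} (hω : 0 < P ω) :
    0 < blockMass P r ω :=
  hω.trans_le (single_le_sum (fun ω' _ => hP ω') (by simp))

theorem blockMass_mono (hP : ∀ ω, 0 ≤ P ω) {r s : Setoid Ω} (h : r ≤ s) (ω : Ω) :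
    blockMass P r ω ≤ blockMass P s ω := by
  classical
  exact sum_le_sum_of_subset_of_nonneg (monotone_filter_right _ fun _ _ => @h _ _)
    fun ω' _ _ => hP ω'

theorem entH_eq_partitionEntropy_ker {T : Type*} (P : Ω → ℝ) (X : Ω → T) :
    entH P X = partitionEntropy P (Setoid.ker X) := by
  classical
  unfold entH partitionEntropy
  rw [← sum_neg_distrib,
    ← sum_fiberwise_of_maps_to (g := X) fun ω _ => mem_image_of_mem X (mem_univ ω)]
  refine sum_congr (by congr!) fun x _ => ?_
  have block_eq : ∀ ω ∈ univ.filter (X · = x),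
      blockMass P (Setoid.ker X) ω = ∑ ω' with X ω' = x, P ω' := by
    intro ω hω
    simp only [blockMass, Setoid.ker_def, (mem_filter.1 hω).2, eq_comm]
  rw [sum_mul, ← sum_neg_distrib]
  exact sum_congr (by congr!) fun ω hω => by rw [block_eq ω (by simpa using hω)]

theorem partitionEntropy_top (hP : ∑ ω, P ω = 1) : partitionEntropy P ⊤ = 0 := by
  simp [partitionEntropy, blockMass, Setoid.top_def, hP]

theorem partitionEntropy_antitone (hP : ∀ ω, 0 ≤ P ω) : Antitone (partitionEntropy P) := by
  intro r s hrs
  refine neg_le_neg (sum_le_sum fun ω _ => ?_)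
  rcases (hP ω).eq_or_lt with hω | hω
  · simp [← hω]
  · gcongr
    · norm_num
    · exact blockMass_pos hP r hω
    · exact blockMass_mono hP hrs ω

open Classical in
theorem sum_div_blockMass_inf_le {r s t : Setoid Ω} (hrt : r ≤ t) (hst : s ≤ t)
    (ω₁ ω₂ : Ω) :
    ∑ ω with r ω ω₁ ∧ s ω₂ ω, P ω / blockMass P (r ⊓ s) ω ≤ if t ω₂ ω₁ then 1 else 0 := by
  by_cases h : ∃ ω₀, r ω₀ ω₁ ∧ s ω₂ ω₀
  · obtain ⟨ω₀, hr, hs⟩ := h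
    rw [if_pos (t.trans' (hst hs) (hrt hr))]
    have mem_block (ω : Ω) : r ω ω₁ ∧ s ω₂ ω ↔ (r ⊓ s) ω₀ ω :=
      ⟨fun h => ⟨r.trans' hr (r.symm' h.1), s.trans' (s.symm' hs) h.2⟩,
        fun h => ⟨r.trans' (r.symm' h.1) hr, s.trans' hs h.2⟩⟩
    calc ∑ ω with r ω ω₁ ∧ s ω₂ ω, P ω / blockMass P (r ⊓ s) ω
        = ∑ ω with (r ⊓ s) ω₀ ω, P ω / blockMass P (r ⊓ s) ω₀ := by
          simp only [mem_block]
          exact sum_congr rfl fun ω hω => by rw [blockMass_congr (mem_filter.1 hω).2]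
      _ = blockMass P (r ⊓ s) ω₀ / blockMass P (r ⊓ s) ω₀ := (sum_div ..).symm
      _ ≤ 1 := div_self_le_one _
  · rw [filter_false_of_mem fun ω _ hω => h ⟨ω, hω⟩, sum_empty]
    split_ifs <;> norm_num

open Classical in
theorem sum_mul_blockMass (A : Finset Ω) (f : Ω → ℝ) (r : Setoid Ω) :
    ∑ ω ∈ A, f ω * blockMass P r ω = ∑ ω', P ω' * ∑ ω ∈ A with r ω ω', f ω := by
  simp only [blockMass, sum_filter, mul_sum]
  rw [sum_comm]
  exact sum_congr rfl fun ω' _ => sum_congr rfl fun ω _ => by split_ifs <;> ring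

open Classical in
theorem sum_mul_blockMass_div_le (hP : ∀ ω, 0 ≤ P ω) {r s t : Setoid Ω} (hrt : r ≤ t)
    (hst : s ≤ t) (ω₂ : Ω) :
    ∑ ω with s ω₂ ω, P ω / blockMass P (r ⊓ s) ω * blockMass P r ω ≤ blockMass P t ω₂ := by
  rw [sum_mul_blockMass, blockMass, sum_filter]
  refine sum_le_sum fun ω₁ _ => ?_
  rw [filter_filter]
  simp only [and_comm (a := s ω₂ _)]
  calc P ω₁ * _ ≤ P ω₁ * if t ω₂ ω₁ then 1 else 0 :=
        mul_le_mul_of_nonneg_left (sum_div_blockMass_inf_le hrt hst ω₁ ω₂) (hP ω₁)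
    _ = if t ω₂ ω₁ then P ω₁ else 0 := by simp

/-- The average likelihood ratio between the coupling of `r` and `s` that is conditionally
independent given `t` and the actual one is at most one. -/
theorem sum_mul_blockMass_ratio_le (hP : ∀ ω, 0 ≤ P ω) {r s t : Setoid Ω} (hrt : r ≤ t)
    (hst : s ≤ t) :
    ∑ ω, P ω * (blockMass P r ω * blockMass P s ω / (blockMass P (r ⊓ s) ω * blockMass P t ω)) ≤
      ∑ ω, P ω := by
  classical
  calc _ = ∑ ω, P ω / blockMass P (r ⊓ s) ω * blockMass P r ω / blockMass P t ω *
          blockMass P s ω := sum_congr rfl fun ω _ => by ring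
    _ = ∑ ω₂, P ω₂ * ((∑ ω with s ω₂ ω, P ω / blockMass P (r ⊓ s) ω * blockMass P r ω) /
          blockMass P t ω₂) := by
        rw [sum_mul_blockMass]
        refine sum_congr rfl fun ω₂ _ => ?_
        simp only [s.comm' (y := ω₂)]
        rw [sum_div]
        refine congrArg _ (sum_congr rfl fun ω hω => ?_)
        rw [blockMass_congr (hst (mem_filter.1 hω).2)]
    _ ≤ ∑ ω₂, P ω₂ := sum_le_sum fun ω₂ _ => mul_le_of_le_one_right (hP ω₂) <|
        div_le_one_of_le₀ (sum_mul_blockMass_div_le hP hrt hst ω₂) (blockMass_nonneg hP t ω₂)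

theorem mul_logb_blockMass_le (hP : ∀ ω, 0 ≤ P ω) (r s t : Setoid Ω) (ω : Ω) :
    P ω * (Real.logb 2 (blockMass P r ω) + Real.logb 2 (blockMass P s ω) -
        (Real.logb 2 (blockMass P (r ⊓ s) ω) + Real.logb 2 (blockMass P t ω))) ≤
      (P ω * (blockMass P r ω * blockMass P s ω / (blockMass P (r ⊓ s) ω * blockMass P t ω)) -
        P ω) / Real.log 2 := by
  rcases (hP ω).eq_or_lt with hω | hω
  · simp [← hω]
  have pos (q : Setoid Ω) : 0 < blockMass P q ω := blockMass_pos hP q hω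
  have num_pos := mul_pos (pos r) (pos s)
  have den_pos := mul_pos (pos (r ⊓ s)) (pos t)
  rw [← Real.logb_mul (pos r).ne' (pos s).ne', ← Real.logb_mul (pos _).ne' (pos t).ne',
    ← Real.logb_div num_pos.ne' den_pos.ne', Real.logb, mul_div_assoc', ← mul_sub_one]
  gcongr
  exact Real.log_le_sub_one_of_pos (div_pos num_pos den_pos)

theorem partitionEntropy_inf_add_sup_le (hP : ∀ ω, 0 ≤ P ω) (r s : Setoid Ω) :
    partitionEntropy P (r ⊓ s) + partitionEntropy P (r ⊔ s) ≤
      partitionEntropy P r + partitionEntropy P s := by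
  have ratio := sum_mul_blockMass_ratio_le hP (le_sup_left : r ≤ r ⊔ s) le_sup_right
  have sum_log_le := (sum_le_sum fun ω _ => mul_logb_blockMass_le hP r s (r ⊔ s) ω).trans_eq
    (sum_div univ _ _).symm
  rw [sum_sub_distrib] at sum_log_le
  have sum_log_nonpos := sum_log_le.trans
    (div_nonpos_of_nonpos_of_nonneg (sub_nonpos.2 ratio) (Real.log_nonneg one_le_two))
  simp only [mul_add, mul_sub, sum_add_distrib, sum_sub_distrib] at sum_log_nonpos
  simp only [partitionEntropy]
  linarith

end Entropy

section Polymatroid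

variable {ι : Type*} [DecidableEq ι] {f : Finset ι → ℝ}

/-- A polymatroid rank function on the finite subsets of `ι`. Here it is the joint entropy of a
family of random variables indexed by `ι`. -/
structure IsPolymatroid (f : Finset ι → ℝ) : Prop where
  empty : f ∅ = 0
  mono : Monotone f
  submodular : ∀ A B, f (A ∪ B) + f (A ∩ B) ≤ f A + f B

/-- The set `A` determines `X` when adding `X` does not raise the rank; for entropies, the
variables in `X` are almost surely functions of those in `A`. -/
def Determines (f : Finset ι → ℝ) (A X : Finset ι) : Prop :=
  f (A ∪ X) ≤ f A

/-- The conditional mutual information `I(A; B | C)` of a set function. -/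
def condMutualInfo (f : Finset ι → ℝ) (A B C : Finset ι) : ℝ :=
  f (A ∪ C) + f (B ∪ C) - f (A ∪ B ∪ C) - f C

theorem Determines.of_subset {A X : Finset ι} (h : X ⊆ A) : Determines f A X :=
  (congrArg f (union_eq_left.2 h)).le

theorem isPolymatroid_partitionEntropy {Ω : Type*} [Fintype Ω] {P : Ω → ℝ}
    (hP : ∀ ω, 0 ≤ P ω) (hP₁ : ∑ ω, P ω = 1) (r : ι → Setoid Ω) :
    IsPolymatroid fun A => partitionEntropy P (A.inf r) where
  empty := partitionEntropy_top hP₁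
  mono _ _ h := partitionEntropy_antitone hP (inf_mono h)
  submodular A B := by
    have sup_le_inter : A.inf r ⊔ B.inf r ≤ (A ∩ B).inf r :=
      sup_le (inf_mono inter_subset_left) (inf_mono inter_subset_right)
    rw [inf_union]
    exact (add_le_add_right (partitionEntropy_antitone hP sup_le_inter) _).trans
      (partitionEntropy_inf_add_sup_le hP _ _)

namespace IsPolymatroid

theorem add_le_add_of_subset (hf : IsPolymatroid f) {A B C D : Finset ι} (hC : C ⊆ A ∪ B)
    (hDA : D ⊆ A) (hDB : D ⊆ B) : f C + f D ≤ f A + f B :=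
  (add_le_add (hf.mono hC) (hf.mono (subset_inter hDA hDB))).trans (hf.submodular A B)

theorem union_le (hf : IsPolymatroid f) (A B : Finset ι) : f (A ∪ B) ≤ f A + f B := by
  simpa [hf.empty] using
    hf.add_le_add_of_subset (subset_refl (A ∪ B)) (empty_subset A) (empty_subset B)

theorem le_card_mul (hf : IsPolymatroid f) {A : Finset ι} {c : ℝ} (hA : ∀ v ∈ A, f {v} ≤ c) :
    f A ≤ #A * c := by
  induction A using Finset.induction_on with
  | empty => simp [hf.empty]
  | insert v A hv ih =>
    have tail_le := ih fun w hw => hA w (mem_insert_of_mem hw)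
    have head_le := hA v (mem_insert_self v A)
    rw [card_insert_of_notMem hv, insert_eq]
    push_cast
    linarith [hf.union_le {v} A]

theorem determines_mono (hf : IsPolymatroid f) {A B X Y : Finset ι} (h : Determines f A X)
    (hAB : A ⊆ B) (hYX : Y ⊆ X) : Determines f B Y := by
  have exchange := hf.add_le_add_of_subset (A := A ∪ X) (B := B) (C := B ∪ Y) (D := A)
    (by grind) subset_union_left hAB
  unfold Determines at *
  linarith

theorem determines_union (hf : IsPolymatroid f) {A X Y : Finset ι} (hX : Determines f A X)
    (hY : Determines f A Y) : Determines f A (X ∪ Y) := by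
  have hY' := hf.determines_mono hY (subset_union_left (s₂ := X)) subset_rfl
  unfold Determines at *
  rw [← union_assoc]
  exact hY'.trans hX

theorem determines_trans (hf : IsPolymatroid f) {A X Y : Finset ι} (hX : Determines f A X)
    (hY : Determines f X Y) : Determines f A Y := by
  have hY' := hf.determines_mono hY (subset_union_right (s₁ := A)) subset_rfl
  exact (hf.mono (by grind)).trans (hY'.trans hX)

theorem determines_of_forall_singleton (hf : IsPolymatroid f) {A X : Finset ι}
    (h : ∀ v ∈ X, Determines f A {v}) : Determines f A X := by
  induction X using Finset.induction_on with
  | empty => exact .of_subset (empty_subset A)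
  | insert v X _ ih =>
    rw [insert_eq]
    exact hf.determines_union (h v (mem_insert_self v X))
      (ih fun w hw => h w (mem_insert_of_mem hw))

/-- Data processing: two parties cannot raise their mutual information by each publishing a
part `Yᵢ` of what they know. -/
theorem condMutualInfo_le_of_subset (hf : IsPolymatroid f) {P₁ P₂ Y₁ Y₂ Z₁ Z₂ : Finset ι}
    (hY₁ : Y₁ ⊆ P₁) (hZ₁ : Z₁ ⊆ P₁) (hY₂ : Y₂ ⊆ P₂) (hZ₂ : Z₂ ⊆ P₂) :
    condMutualInfo f Z₁ Z₂ (Y₁ ∪ Y₂) ≤ f P₁ + f P₂ - f (P₁ ∪ P₂) := by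
  have add_Y₁ := hf.add_le_add_of_subset (A := P₂) (B := Y₁ ∪ Y₂) (C := P₂ ∪ Y₁) (D := Y₂)
    (by grind) hY₂ subset_union_right
  have add_Z₁ := hf.add_le_add_of_subset (A := P₂ ∪ Y₁) (B := Z₁ ∪ Z₂ ∪ (Y₁ ∪ Y₂))
    (C := P₂ ∪ Y₁ ∪ Z₁) (D := Z₂ ∪ (Y₁ ∪ Y₂)) (by grind) (by grind) (by grind)
  have add_P₁ := hf.add_le_add_of_subset (A := P₁) (B := P₂ ∪ Y₁ ∪ Z₁) (C := P₁ ∪ P₂)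
    (D := Z₁ ∪ Y₁) (by grind) (by grind) (by grind)
  have drop_Y₂ := hf.union_le (Z₁ ∪ Y₁) Y₂
  rw [union_assoc] at drop_Y₂
  unfold condMutualInfo
  linarith

theorem two_mul_add_le_condMutualInfo (hf : IsPolymatroid f) {P₁ P₂ Y Z₁ Z₂ : Finset ι}
    (hY : Y ⊆ P₁ ∪ P₂) (hZ₁ : Z₁ ⊆ P₁) (hZ₂ : Z₂ ⊆ P₂) (m : Finset ι) :
    2 * f (P₁ ∪ P₂ ∪ m) + f (m ∪ Z₁) + f (Y ∪ Z₂) ≤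
      f (P₁ ∪ P₂) + f (Y ∪ m) + f (m ∪ Z₁ ∪ P₂) + f (m ∪ Z₂ ∪ P₁) +
        condMutualInfo f Z₁ Z₂ Y := by
  have glue_parties := hf.add_le_add_of_subset (A := m ∪ Z₁ ∪ P₂) (B := m ∪ Z₂ ∪ P₁)
    (C := P₁ ∪ P₂ ∪ m) (D := m ∪ Z₁ ∪ Z₂) (by grind) (by grind) (by grind)
  have add_Z₂ := hf.add_le_add_of_subset (A := m ∪ Z₁ ∪ Z₂) (B := m ∪ Z₁ ∪ Y)
    (C := m ∪ (Z₁ ∪ Z₂ ∪ Y)) (D := m ∪ Z₁) (by grind) (by grind) (by grind)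
  have add_m := hf.add_le_add_of_subset (A := m ∪ (Z₁ ∪ Z₂ ∪ Y)) (B := P₁ ∪ P₂)
    (C := P₁ ∪ P₂ ∪ m) (D := Z₁ ∪ Z₂ ∪ Y) (by grind) (by grind) (by grind)
  have add_Z₁ := hf.add_le_add_of_subset (A := Y ∪ m) (B := Z₁ ∪ Y) (C := m ∪ Z₁ ∪ Y) (D := Y)
    (by grind) (by grind) (by grind)
  unfold condMutualInfo
  rw [union_comm Z₂ Y]
  linarith

/-- Party `Pᵢ` sends `Yᵢ` to a third party holding `m`, and `Zᵢ` to the other party. -/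
theorem two_mul_add_le_of_determines (hf : IsPolymatroid f) {P₁ P₂ Y₁ Y₂ Z₁ Z₂ : Finset ι}
    (h₁ : Determines f P₁ (Y₁ ∪ Z₁)) (h₂ : Determines f P₂ (Y₂ ∪ Z₂)) (m : Finset ι) :
    2 * f (P₁ ∪ P₂ ∪ m) + f (m ∪ Z₁) + f (Y₁ ∪ Y₂ ∪ Z₂) ≤
      f P₁ + f P₂ + f (Y₁ ∪ Y₂ ∪ m) + f (m ∪ Z₁ ∪ P₂) + f (m ∪ Z₂ ∪ P₁) := by
  have data_processing := hf.condMutualInfo_le_of_subset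
    (P₁ := P₁ ∪ (Y₁ ∪ Z₁)) (P₂ := P₂ ∪ (Y₂ ∪ Z₂)) (Y₁ := Y₁) (Y₂ := Y₂) (Z₁ := Z₁) (Z₂ := Z₂)
    (by grind) (by grind) (by grind) (by grind)
  have three_party := hf.two_mul_add_le_condMutualInfo
    (P₁ := P₁ ∪ (Y₁ ∪ Z₁)) (P₂ := P₂ ∪ (Y₂ ∪ Z₂)) (Y := Y₁ ∪ Y₂) (Z₁ := Z₁) (Z₂ := Z₂)
    (by grind) (by grind) (by grind) m
  have drop₁ : f (m ∪ Z₂ ∪ (P₁ ∪ (Y₁ ∪ Z₁))) ≤ f (m ∪ Z₂ ∪ P₁) := by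
    rw [← union_assoc]
    exact hf.determines_mono h₁ subset_union_right subset_rfl
  have drop₂ : f (m ∪ Z₁ ∪ (P₂ ∪ (Y₂ ∪ Z₂))) ≤ f (m ∪ Z₁ ∪ P₂) := by
    rw [← union_assoc]
    exact hf.determines_mono h₂ subset_union_right subset_rfl
  have joint_le := hf.mono (show P₁ ∪ P₂ ∪ m ⊆ P₁ ∪ (Y₁ ∪ Z₁) ∪ (P₂ ∪ (Y₂ ∪ Z₂)) ∪ m by grind)
  unfold Determines at h₁ h₂
  linarith

end IsPolymatroid

end Polymatroid

section RepairPolymatroid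

variable {V : Type*}

/-- The variables of a regenerating code with set of nodes `V`: `Sum.inl j` is the data stored on
node `j` and `Sum.inr (i, j)` the helper data sent from node `i` to repair node `j`. -/
abbrev CodeVar (V : Type*) := V ⊕ V × V

/-- The variables `W_J`. -/
def stored (J : Finset V) : Finset (CodeVar V) :=
  J.map .inl

@[simp]
theorem inl_mem_stored {j : V} {J : Finset V} : Sum.inl j ∈ stored J ↔ j ∈ J := by
  simp [stored]

variable [DecidableEq V]

/-- The variables `S_I^J`. As in the paper, the pairs `(i, i)` are left out. -/
def helpers (I J : Finset V) : Finset (CodeVar V) :=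
  {e ∈ I ×ˢ J | e.1 ≠ e.2}.map .inr

@[simp]
theorem inr_mem_helpers {i j : V} {I J : Finset V} :
    Sum.inr (i, j) ∈ helpers I J ↔ (i ∈ I ∧ j ∈ J) ∧ i ≠ j := by
  simp [helpers]

theorem forall_mem_helpers {I J : Finset V} {p : CodeVar V → Prop} :
    (∀ v ∈ helpers I J, p v) ↔ ∀ i ∈ I, ∀ j ∈ J, i ≠ j → p (Sum.inr (i, j)) := by
  simp only [helpers, forall_mem_map, mem_filter, mem_product, Prod.forall, and_imp]
  exact ⟨fun h i hi j hj => h i j hi hj, fun h i j hi hj => h i hi j hj⟩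

theorem stored_union (I J : Finset V) : stored (I ∪ J) = stored I ∪ stored J :=
  map_union _ _

theorem helpers_union_left (I I' J : Finset V) :
    helpers (I ∪ I') J = helpers I J ∪ helpers I' J := by
  simp only [helpers, union_product, filter_union, map_union]

theorem helpers_subset_helpers {I I' J J' : Finset V} (hI : I ⊆ I') (hJ : J ⊆ J') :
    helpers I J ⊆ helpers I' J' :=
  map_subset_map.2 (filter_subset_filter _ (product_subset_product hI hJ))

theorem card_helpers_le (I J : Finset V) : #(helpers I J) ≤ #I * #J := by
  rw [helpers, card_map, ← card_product]
  exact card_filter_le _ _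

variable [Fintype V]

/-- The properties of the joint entropies of the variables of an exact-repair regenerating code
that enter the outer bound: the file is only remembered through its size `B`. -/
structure IsRepairPolymatroid (k d : ℕ) (B α β : ℝ) (f : Finset (CodeVar V) → ℝ) : Prop
    extends IsPolymatroid f where
  lt_card : d < Fintype.card V
  helper_size_nonneg : 0 ≤ β
  stored_le : ∀ j, f (stored {j}) ≤ α
  helper_le : ∀ i j, i ≠ j → f {Sum.inr (i, j)} ≤ β
  file_le : ∀ J, k ≤ #J → B ≤ f (stored J)
  helper_of_stored : ∀ i j, i ≠ j → Determines f (stored {i}) {Sum.inr (i, j)}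
  repair : ∀ j I, d ≤ #I → j ∉ I → Determines f (helpers I {j}) (stored {j})

namespace IsRepairPolymatroid

variable {k d : ℕ} {B α β : ℝ} {f : Finset (CodeVar V) → ℝ}

theorem stored_le_card_mul (hf : IsRepairPolymatroid k d B α β f) (J : Finset V) :
    f (stored J) ≤ #J * α := by
  have := hf.le_card_mul (A := stored J) (c := α) (by
    simpa [stored] using fun j _ => hf.stored_le j)
  rwa [stored, card_map] at this

theorem helpers_le_card_mul (hf : IsRepairPolymatroid k d B α β f) (I J : Finset V) :
    f (helpers I J) ≤ #I * #J * β :=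
  calc f (helpers I J) ≤ #(helpers I J) * β :=
        hf.le_card_mul (forall_mem_helpers.2 fun i _ j _ => hf.helper_le i j)
    _ ≤ #I * #J * β :=
        mul_le_mul_of_nonneg_right (mod_cast card_helpers_le I J) hf.helper_size_nonneg

theorem determines_helpers (hf : IsRepairPolymatroid k d B α β f) {A : Finset (CodeVar V)}
    {I J : Finset V}
    (h : ∀ i ∈ I, ∀ j ∈ J, i ≠ j → Sum.inl i ∈ A ∨ Sum.inr (i, j) ∈ A) :
    Determines f A (helpers I J) := by
  refine hf.determines_of_forall_singleton (forall_mem_helpers.2 fun i hi j hj hij => ?_)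
  rcases h i hi j hj hij with h | h
  · exact hf.determines_mono (hf.helper_of_stored i j hij) (by simpa [stored] using h) subset_rfl
  · exact .of_subset (singleton_subset_iff.2 h)

theorem stored_determines_helpers (hf : IsRepairPolymatroid k d B α β f) (I J : Finset V) :
    Determines f (stored I) (helpers I J) :=
  hf.determines_helpers fun _ hi _ _ _ => .inl (inl_mem_stored.2 hi)

theorem union_stored_singleton_le (hf : IsRepairPolymatroid k d B α β f)
    {A : Finset (CodeVar V)} {G : Finset V} {j : V} (hj : j ∉ G) (hG : #G ≤ d)
    (hA : Determines f A (helpers G {j})) :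
    f (A ∪ stored {j}) ≤ f A + (d - #G) * β := by
  obtain ⟨I, hGI, hjI, hI⟩ : ∃ I, G ⊆ I ∧ I ⊆ {j}ᶜ ∧ #I = d :=
    exists_subsuperset_card_eq (by simpa using hj) hG (by
      have := hf.lt_card
      rw [card_compl, card_singleton]
      lia)
  have card_new : (#(I \ G) : ℝ) = d - #G := by
    rw [card_sdiff_of_subset hGI, hI, Nat.cast_sub hG]
  have all_helpers : Determines f (A ∪ helpers (I \ G) {j}) (helpers I {j}) := by
    rw [← union_sdiff_of_subset hGI, helpers_union_left, union_sdiff_of_subset hGI]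
    exact hf.determines_union (hf.determines_mono hA subset_union_left subset_rfl)
      (.of_subset subset_union_right)
  have repaired := hf.determines_trans all_helpers (hf.repair j I hI.ge (by simpa using hjI))
  calc f (A ∪ stored {j}) ≤ f (A ∪ helpers (I \ G) {j} ∪ stored {j}) := hf.mono (by grind)
    _ ≤ f (A ∪ helpers (I \ G) {j}) := repaired
    _ ≤ f A + f (helpers (I \ G) {j}) := hf.union_le _ _
    _ ≤ f A + (d - #G) * β := by
        simpa [card_new] using hf.helpers_le_card_mul (I \ G) {j}

/-- Successive repair of the nodes in `N`: each repaired node joins the known helpers `G`, so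
that the `i`-th repair needs `d - #G - i` new helper messages. -/
theorem union_stored_le (hf : IsRepairPolymatroid k d B α β f) {A : Finset (CodeVar V)}
    {G N : Finset V} (hNG : Disjoint N G) (hcard : #G + #N ≤ d + 1)
    (hA : Determines f A (helpers G N)) :
    f (A ∪ stored N) ≤ f A + (#N * (d - #G) - #N * (#N - 1) / 2) * β := by
  induction N using Finset.induction_on generalizing A G with
  | empty => simp [stored]
  | insert j N hj ih =>
    rw [disjoint_insert_left] at hNG
    rw [card_insert_of_notMem hj] at hcard ⊢
    have repair_j := hf.union_stored_singleton_le hNG.1 (by lia)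
      (hf.determines_mono hA subset_rfl (helpers_subset_helpers subset_rfl (by simp)))
    have repair_N := ih (A := A ∪ stored {j}) (G := insert j G)
      (disjoint_insert_right.2 ⟨hj, hNG.2⟩) (by rw [card_insert_of_notMem hNG.1]; lia) (by
        rw [insert_eq, helpers_union_left]
        refine hf.determines_union (hf.determines_helpers (by simp_all)) ?_
        exact hf.determines_mono hA subset_union_left
          (helpers_subset_helpers subset_rfl (subset_insert j N)))
    rw [insert_eq, stored_union, ← union_assoc]
    rw [card_insert_of_notMem hNG.1] at repair_N
    push_cast at repair_N ⊢
    linarith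

/-- `T` and `U` send to `N`, and `U` sends to `T`. From these messages and the nodes `K`, one
repairs `N` and then `T`. -/
theorem file_le_add_messages (hf : IsRepairPolymatroid k d B α β f) {T U N K : Finset V}
    (hTU : Disjoint T U) (hTN : Disjoint T N) (hUN : Disjoint U N) (hK : Disjoint (T ∪ U ∪ N) K)
    (hk : k ≤ #K + #N + #T) (hd : #T + #U + #N + #K ≤ d + 1) :
    B ≤ #K * α + f (helpers T N ∪ helpers U N ∪ helpers U T) +
      ((#N * (d - (#K + #T + #U)) - #N * (#N - 1) / 2) +
        (#T * (d - (#K + #N + #U)) - #T * (#T - 1) / 2)) * β := by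
  simp only [disjoint_union_left] at hK
  obtain ⟨⟨hTK, hUK⟩, hNK⟩ := hK
  set A := stored K ∪ (helpers T N ∪ helpers U N ∪ helpers U T)
  have card_KTU : #(K ∪ T ∪ U) = #K + #T + #U := by
    rw [card_union_of_disjoint (by simp [hTU, hUK.symm]), card_union_of_disjoint hTK.symm]
  have card_KNU : #(K ∪ N ∪ U) = #K + #N + #U := by
    rw [card_union_of_disjoint (by simp [hUN.symm, hUK.symm]), card_union_of_disjoint hNK.symm]
  have repair_N := hf.union_stored_le (A := A) (G := K ∪ T ∪ U) (N := N)
    (by simp [hTN.symm, hUN.symm, hNK]) (by lia)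
    (hf.determines_helpers (by grind [inl_mem_stored, inr_mem_helpers]))
  have repair_T := hf.union_stored_le (A := A ∪ stored N) (G := K ∪ N ∪ U) (N := T)
    (by simp [hTN, hTU, hTK]) (by lia)
    (hf.determines_helpers (by grind [inl_mem_stored, inr_mem_helpers]))
  have file : B ≤ f (A ∪ stored N ∪ stored T) := by
    refine (hf.file_le (K ∪ N ∪ T) ?_).trans (hf.mono ?_)
    · rwa [card_union_of_disjoint (by simp [hTN.symm, hTK.symm]),
        card_union_of_disjoint hNK.symm]
    · rw [stored_union, stored_union]
      grind
  have split_A := hf.union_le (stored K) (helpers T N ∪ helpers U N ∪ helpers U T)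
  have stored_K := hf.stored_le_card_mul K
  rw [card_KTU] at repair_N
  rw [card_KNU] at repair_T
  push_cast at repair_N repair_T
  linarith

/-- `T` and `U` are two parties that send to `N` and to each other. -/
theorem two_mul_file_add_messages_le (hf : IsRepairPolymatroid k d B α β f) {T U N : Finset V}
    (hTU : Disjoint T U) (hTN : Disjoint T N) (hUN : Disjoint U N)
    (hk : #T + #U + #N = k) (hd : k ≤ d + 1) :
    2 * B + f (helpers T N ∪ helpers U N ∪ helpers U T) ≤
      k * α + (k * d - k * (k - 1) / 2) * β := by
  have repair_N := hf.union_stored_le (A := helpers T N ∪ helpers U N) (G := T ∪ U) (N := N)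
    (by simp [hTN.symm, hUN.symm]) (by rw [card_union_of_disjoint hTU]; lia)
    (.of_subset (helpers_union_left T U N).subset)
  have repair_U := hf.union_stored_le (A := stored N ∪ helpers T U) (G := N ∪ T) (N := U)
    (by simp [hTU.symm, hUN]) (by rw [card_union_of_disjoint hTN.symm]; lia)
    (hf.determines_helpers (by grind [inl_mem_stored, inr_mem_helpers]))
  have repair_T := hf.union_stored_le (A := stored N ∪ helpers U T) (G := N ∪ U) (N := T)
    (by simp [hTU, hTN]) (by rw [card_union_of_disjoint hUN.symm]; lia)
    (hf.determines_helpers (by grind [inl_mem_stored, inr_mem_helpers]))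
  have two_party := hf.two_mul_add_le_of_determines
    (P₁ := stored T) (P₂ := stored U) (Y₁ := helpers T N) (Y₂ := helpers U N)
    (Z₁ := helpers T U) (Z₂ := helpers U T)
    (hf.determines_union (hf.stored_determines_helpers T N) (hf.stored_determines_helpers T U))
    (hf.determines_union (hf.stored_determines_helpers U N) (hf.stored_determines_helpers U T))
    (stored N)
  have file : B ≤ f (stored T ∪ stored U ∪ stored N) := by
    rw [← stored_union, ← stored_union]
    refine hf.file_le _ ?_
    rw [card_union_of_disjoint (by simp [hTN, hUN]), card_union_of_disjoint hTU, hk]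
  rw [card_union_of_disjoint hTU] at repair_N
  rw [card_union_of_disjoint hTN.symm] at repair_U
  rw [card_union_of_disjoint hUN.symm] at repair_T
  subst hk
  push_cast at repair_N repair_U repair_T ⊢
  linarith [hf.stored_le_card_mul T, hf.stored_le_card_mul U, hf.stored_le_card_mul N,
    hf.helpers_le_card_mul T N, hf.helpers_le_card_mul U N, hf.helpers_le_card_mul U T,
    hf.union_le (helpers T N) (helpers U N), hf.union_le (stored N) (helpers U T)]

end IsRepairPolymatroid

end RepairPolymatroid

theorem Bfun_eq {k d q : ℕ} (hq : q ≤ k) (hk : k ≤ d + 1) (α β : ℝ) :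
    Bfun k d q α β =
      q * α + ((k - q) * (k - q - 1) / 2 + (d + 1 - k) * (k - q)) * β := by
  obtain ⟨m, rfl⟩ := Nat.exists_eq_add_of_le hq
  obtain ⟨c, hc⟩ := Nat.exists_eq_add_of_le hk
  have hc' : (d : ℝ) + 1 = q + m + c := by exact_mod_cast hc
  have cast_pred_mul : ((m * (m - 1) : ℕ) : ℝ) = m * (m - 1) := by cases m <;> simp
  rw [Bfun, hc, hc', Nat.add_sub_cancel_left, Nat.add_sub_cancel_left, cast_pred_mul]
  push_cast
  ring

theorem exists_disjoint_card_eq {V : Type*} [Fintype V] (X : Finset V) {m : ℕ}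
    (h : #X + m ≤ Fintype.card V) : ∃ Y, Disjoint X Y ∧ #Y = m := by
  classical
  obtain ⟨Y, hY, hm⟩ := exists_subset_card_eq (s := Xᶜ) (n := m) (by rw [card_compl]; lia)
  exact ⟨Y, disjoint_compl_right.mono_right hY, hm⟩

theorem IsRepairPolymatroid.three_mul_le {V : Type*} [DecidableEq V] [Fintype V] {k d : ℕ}
    {B α β : ℝ} {f : Finset (CodeVar V) → ℝ} (hf : IsRepairPolymatroid k d B α β f) {t u ν : ℕ}
    (hk : t + u + ν = k) (hu : k + u ≤ d + 1) :
    3 * B ≤ Bfun k d 0 α β + Bfun k d u α β + Bfun k d k α β -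
      (t * u + u * ν + ν * t) * β := by
  have hV := hf.lt_card
  obtain ⟨T, -, rfl⟩ := exists_disjoint_card_eq (∅ : Finset V) (m := t)
    (by rw [card_empty]; lia)
  obtain ⟨U, hTU, rfl⟩ := exists_disjoint_card_eq T (m := u) (by lia)
  have card_TU := card_union_of_disjoint hTU
  obtain ⟨N, hTUN, rfl⟩ := exists_disjoint_card_eq (T ∪ U) (m := ν) (by lia)
  have card_TUN := card_union_of_disjoint hTUN
  obtain ⟨K, hK, hKU⟩ := exists_disjoint_card_eq (T ∪ U ∪ N) (m := #U) (by lia)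
  obtain ⟨hTN, hUN⟩ := disjoint_union_left.1 hTUN
  have messages_ge := hf.file_le_add_messages hTU hTN hUN hK (by lia) (by lia)
  have messages_le := hf.two_mul_file_add_messages_le hTU hTN hUN hk (by lia)
  rw [Bfun_eq k.zero_le (by lia), Bfun_eq (by lia : #U ≤ k) (by lia), Bfun_eq le_rfl (by lia)]
  rw [hKU] at messages_ge
  subst hk
  push_cast at *
  linarith

section Code

variable {Ω : Type*} {n : ℕ} {σW : Fin n → Type*} {σS : Fin n → Fin n → Type*}
  {W : ∀ j, Ω → σW j} {S : ∀ i j, Ω → σS i j}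

/-- The partition of the sample space into the level sets of a variable of the code. -/
def codePartition (W : ∀ j, Ω → σW j) (S : ∀ i j, Ω → σS i j) : CodeVar (Fin n) → Setoid Ω :=
  Sum.elim (fun j => .ker (W j)) fun e => .ker (S e.1 e.2)

theorem ker_prodMk {X Y : Type*} (f : Ω → X) (g : Ω → Y) :
    Setoid.ker (fun ω => (f ω, g ω)) = Setoid.ker f ⊓ Setoid.ker g :=
  Setoid.ext fun _ _ => Prod.mk_inj

theorem finset_inf_setoid_apply {ι : Type*} (A : Finset ι) (r : ι → Setoid Ω) (ω ω' : Ω) :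
    A.inf r ω ω' ↔ ∀ v ∈ A, r v ω ω' := by
  classical
  induction A using Finset.induction_on with
  | empty => exact iff_of_true trivial fun v hv => absurd hv (notMem_empty v)
  | insert v A _ ih => rw [inf_insert, Setoid.inf_iff_and, ih, forall_mem_insert]

theorem inf_codePartition_stored (J : Finset (Fin n)) :
    (stored J).inf (codePartition W S) = Setoid.ker (jointW W J) := by
  ext ω ω'
  rw [finset_inf_setoid_apply, stored, forall_mem_map, Setoid.ker_def, funext_iff, Subtype.forall]
  rfl

theorem inf_codePartition_stored_singleton (j : Fin n) :
    (stored {j}).inf (codePartition W S) = Setoid.ker (W j) :=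
  inf_singleton

theorem inf_codePartition_helpers {I : Finset (Fin n)} {j : Fin n} (hj : j ∉ I) :
    (helpers I {j}).inf (codePartition W S) = Setoid.ker (jointSto S I j) := by
  ext ω ω'
  rw [finset_inf_setoid_apply, forall_mem_helpers, Setoid.ker_def, funext_iff, Subtype.forall]
  refine forall₂_congr fun i hi => ?_
  have ne_j : i ≠ j := ne_of_mem_of_not_mem hi hj
  simp only [mem_singleton, forall_eq, ne_j, ne_eq, not_false_eq_true, forall_const]
  rfl

theorem condH_eq_zero_iff [Fintype Ω] {P : Ω → ℝ} {X Y : Type*} (f : Ω → X) (g : Ω → Y) :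
    condH P f g = 0 ↔
      partitionEntropy P (.ker f ⊓ .ker g) = partitionEntropy P (.ker g) := by
  rw [condH, entH_eq_partitionEntropy_ker, entH_eq_partitionEntropy_ker, ker_prodMk, sub_eq_zero]

theorem determines_partitionEntropy_iff [Fintype Ω] {P : Ω → ℝ} {ι : Type*}
    [DecidableEq ι] (r : ι → Setoid Ω) (A X : Finset ι) :
    Determines (fun A => partitionEntropy P (A.inf r)) A X ↔
      partitionEntropy P (X.inf r ⊓ A.inf r) ≤ partitionEntropy P (A.inf r) := by
  rw [Determines, inf_union, inf_comm]

theorem IsRegenCode.isRepairPolymatroid [Fintype Ω] {k d : ℕ} {B α β : ℝ} {P : Ω → ℝ}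
    {σM : Type*} {M : Ω → σM} (hcode : IsRegenCode n k d B α β P M W S) :
    IsRepairPolymatroid k d B α β fun A => partitionEntropy P (A.inf (codePartition W S)) where
  toIsPolymatroid :=
    isPolymatroid_partitionEntropy hcode.prob_nonneg hcode.prob_sum (codePartition W S)
  lt_card := by simpa using hcode.hdn
  helper_size_nonneg := hcode.hβ
  stored_le j := by
    rw [inf_codePartition_stored_singleton, ← entH_eq_partitionEntropy_ker, hcode.hWα]
  helper_le i j hij := by
    rw [inf_singleton, ← hcode.hSβ i j hij, entH_eq_partitionEntropy_ker]
    rfl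
  file_le J hJ := by
    rw [inf_codePartition_stored, ← (condH_eq_zero_iff _ _).1 (hcode.hMW J hJ), ← hcode.hMB,
      entH_eq_partitionEntropy_ker]
    exact partitionEntropy_antitone hcode.prob_nonneg inf_le_left
  helper_of_stored i j hij := by
    rw [determines_partitionEntropy_iff, inf_codePartition_stored_singleton, inf_singleton]
    exact ((condH_eq_zero_iff _ _).1 (hcode.hSW i j hij)).le
  repair j I hI hj := by
    rw [determines_partitionEntropy_iff, inf_codePartition_stored_singleton,
      inf_codePartition_helpers hj]
    exact ((condH_eq_zero_iff _ _).1 (hcode.hWS j I hI hj)).le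

end Code

theorem Bfun_zero_add_Bfun_two_mul {p d : ℕ} (hd : 2 * p ≤ d + 1) (α β : ℝ) :
    Bfun (2 * p) d 0 α β + Bfun (2 * p) d (2 * p) α β =
      2 * Bfun (2 * p) d p α β + p ^ 2 * β := by
  rw [Bfun_eq (Nat.zero_le _) hd, Bfun_eq le_rfl hd, Bfun_eq (by lia) hd]
  push_cast
  ring

theorem sq_sub_one_le_four_mul_half (p : ℕ) :
    (p : ℝ) ^ 2 - 1 ≤ 4 * ((p / 2 : ℕ) * (p - p / 2 : ℕ)) := by
  obtain ⟨m, rfl | rfl⟩ := p.even_or_odd'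
  · rw [show 2 * m / 2 = m by lia, show 2 * m - m = m by lia]
    push_cast
    linarith
  · rw [show (2 * m + 1) / 2 = m by lia, show 2 * m + 1 - m = m + 1 by lia]
    push_cast
    linarith

theorem stmt_5_general {Ω : Type*} [Fintype Ω] {n p d : ℕ} {B α β : ℝ} {P : Ω → ℝ}
    {σM : Type*} {σW : Fin n → Type*} {σS : Fin n → Fin n → Type*}
    {M : Ω → σM} {W : ∀ j, Ω → σW j} {S : ∀ i j, Ω → σS i j}
    (hd : 3 * p ≤ d + 1) (hcode : IsRegenCode n (2 * p) d B α β P M W S) :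
    B ≤ Bfun (2 * p) d p α β - ((p : ℝ) ^ 2 - 1) * β / 12 := by
  have half_add : (p / 2 : ℕ) + (p - p / 2 : ℕ) = (p : ℝ) := mod_cast (by lia)
  have three_term := hcode.isRepairPolymatroid.three_mul_le
    (t := p / 2) (u := p) (ν := p - p / 2) (by lia) (by lia)
  have second_difference := Bfun_zero_add_Bfun_two_mul (by lia : 2 * p ≤ d + 1) α β
  have half_mul := mul_le_mul_of_nonneg_right (sq_sub_one_le_four_mul_half p) hcode.hβ
  have cross_terms : ((p / 2 : ℕ) * p + p * (p - p / 2 : ℕ) : ℝ) * β = p ^ 2 * β := by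
    rw [mul_comm (p : ℝ), ← add_mul, half_add, sq]
  linarith

/-- for `k = 2p`, `d = 3p`, `p ≥ 2`: `B ≤ B_p - (p² - 1)β/16`. -/
theorem stmt_5 {Ω : Type*} [Fintype Ω] {n p : ℕ} {B α β : ℝ} {P : Ω → ℝ}
    {σM : Type*} {σW : Fin n → Type*} {σS : Fin n → Fin n → Type*}
    {M : Ω → σM} {W : ∀ j, Ω → σW j} {S : ∀ i j, Ω → σS i j}
    (hp : 2 ≤ p)
    (hcode : IsRegenCode n (2 * p) (3 * p) B α β P M W S) :
    B ≤ Bfun (2 * p) (3 * p) p α β - ((p : ℝ) ^ 2 - 1) * β / 16 := by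
  have gap_nonneg : 0 ≤ ((p : ℝ) ^ 2 - 1) * β :=
    mul_nonneg (sub_nonneg.2 (one_le_pow₀ (mod_cast (by lia)))) hcode.hβ
  linarith [stmt_5_general (Nat.le_succ _) hcode]
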